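/- For ℓ = 2: assume there exists a set cover for R (with parameter Δ), and let S be a set cover of R̃_2 of size k. Then the set of line segments C = { τ_{i,j} : r_{i,j} ∈ S } has size at most k and satisfies φ(P,C) ≤ 6Δ. -/

import Mathlib

/-! Why the theorem holds. Fix `z` and take the pair `(x, y)` and the segment `τ_{i,j}` supplied by
the cover of `R̃₂`. The polyline `π(x, z, z+1, y)` is within `4Δ` of `P[t_x, t_y]`, piece by piece:
the first and the last edge by the choice of `x_z` and `y_z`, and the middle edge because `z` is
covered by `R`: the subcurve `P[t_z, t_{z+1}]` is then within (almost) `Δ` of a piece of a segment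
`Q`, whose end points are as close to `P(t_z)` and `P(t_{z+1})`, so that replacing the piece by
`τ_{z,z+1}` costs another `Δ` (`matched_edge`). The triangle inequality gives
`d_F(P[t_x, t_y], τ_{i,j}) ≤ 4Δ + 2Δ`, and the intervals `[t_x, t_y]` cover `[0,1]` because
`x ≤ z < z+1 ≤ y`.

Since `x = z` or `y = z + 1` is allowed, an edge of the polyline can correspond to a single parameter
of `P`, so strictly increasing reparametrizations cannot be glued directly. The gluing is therefore
done with pairs of weakly increasing traversals (`Matched`). These are perturbed to strictly
increasing ones at an arbitrarily small cost (`Matched.close`), and the triangle inequality is proved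
for the strict version (`Close.trans`). -/

open Set

noncomputable section

/-- Points in `ℝ^d`. -/
abbrev Pt (d : ℕ) : Type := EuclideanSpace ℝ (Fin d)

/-- A reparametrization: a continuous strictly increasing bijection of `[0,1]` onto itself. -/
def IsReparam (γ : ℝ → ℝ) : Prop :=
  ContinuousOn γ (Icc 0 1) ∧ StrictMonoOn γ (Icc 0 1) ∧ γ '' Icc 0 1 = Icc 0 1

/-- The Fréchet distance `d_F(P,Q) = inf_γ sup_{t ∈ [0,1]} ‖P(γ(t)) - Q(t)‖`
(only the values of the curves on `[0,1]` are relevant). -/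
def frechetDist {d : ℕ} (P Q : ℝ → Pt d) : ℝ :=
  ⨅ γ : {γ : ℝ → ℝ // IsReparam γ}, ⨆ s : Icc (0:ℝ) 1, ‖P (γ.1 s.1) - Q s.1‖

/-- The linearly parametrized line segment from `a` to `b`. -/
def seg {d : ℕ} (a b : Pt d) : ℝ → Pt d := fun s => (1 - s) • a + s • b

/-- The subcurve `P[a,b]` of `P`, linearly reparametrized over `[0,1]`. -/
def subcurve {d : ℕ} (P : ℝ → Pt d) (a b : ℝ) : ℝ → Pt d := fun s => P (a + s * (b - a))

/-- The polygonal curve with vertex sequence `pts 0, …, pts n`, uniformly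
parametrized over `[0,1]`. -/
def polyline {d n : ℕ} (pts : Fin (n + 1) → Pt d) : ℝ → Pt d := fun s =>
  if h : n = 0 then pts 0
  else
    let i : ℕ := min ⌊s * n⌋₊ (n - 1)
    have hi : i < n := lt_of_le_of_lt (min_le_right _ _) (by omega)
    (1 - (s * n - i)) • pts ⟨i, hi.trans n.lt_succ_self⟩ +
      (s * n - i) • pts ⟨i + 1, Nat.succ_lt_succ hi⟩

/-- `f ∈ 𝕏^d_ℓ`: `f` is a polygonal curve with at most `ℓ` vertices. -/
def IsPolygonal {d : ℕ} (f : ℝ → Pt d) (ℓ : ℕ) : Prop :=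
  ∃ n : ℕ, n + 1 ≤ ℓ ∧ ∃ pts : Fin (n + 1) → Pt d, f = polyline pts

/-- Concatenation of two curves (each parametrized over `[0,1]`). -/
def concat {d : ℕ} (f g : ℝ → Pt d) : ℝ → Pt d := fun s =>
  if s ≤ 1 / 2 then f (2 * s) else g (2 * s - 1)

/-- `CostLE P m t C Δ` states that the clustering cost satisfies `φ(P,C) ≤ Δ`:
there is a family `I` of index pairs `(i,j)`, `1 ≤ i < j ≤ m`, with
`⋃_{(i,j) ∈ I} [t i, t j] = [0,1]`, such that every corresponding subcurve is
within Fréchet distance `Δ` of some center in `C`. -/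
def CostLE {d : ℕ} (P : ℝ → Pt d) (m : ℕ) (t : ℕ → ℝ) (C : Set (ℝ → Pt d)) (Δ : ℝ) : Prop :=
  ∃ I : Set (ℕ × ℕ),
    (∀ q ∈ I, 1 ≤ q.1 ∧ q.1 < q.2 ∧ q.2 ≤ m) ∧
    (⋃ q ∈ I, Icc (t q.1) (t q.2)) = Icc (0:ℝ) 1 ∧
    ∀ q ∈ I, ∃ c ∈ C, frechetDist (subcurve P (t q.1) (t q.2)) c ≤ Δ

/-- The set `r_Q` of the set system `R` (ground set `{1,…,m−1}`):
`r_Q = {z : ∃ i ≤ z < j, d_F(Q, P[t_i,t_j]) ≤ Δ}`. -/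
def rSet {d : ℕ} (P : ℝ → Pt d) (m : ℕ) (t : ℕ → ℝ) (Δ : ℝ) (Q : ℝ → Pt d) : Set ℕ :=
  {z | 1 ≤ z ∧ z < m ∧ ∃ i j, 1 ≤ i ∧ i ≤ z ∧ z < j ∧ j ≤ m ∧
    frechetDist Q (subcurve P (t i) (t j)) ≤ Δ}

/-- The set `r_{i,j}` of the set system `R̃₂` (case `ℓ = 2`). -/
def rTilde2 {d : ℕ} (P : ℝ → Pt d) (m : ℕ) (t : ℕ → ℝ) (Δ : ℝ)
    (xz yz : ℕ → ℕ) (i j : ℕ) : Set ℕ :=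
  {z | 1 ≤ z ∧ z < m ∧ ∃ x y, xz z ≤ x ∧ x ≤ z ∧ z + 1 ≤ y ∧ y ≤ yz z ∧
    frechetDist (polyline (n := 3) ![P (t x), P (t z), P (t (z+1)), P (t y)])
      (seg (P (t i)) (P (t j))) ≤ 2 * Δ}

/-! ### Strict and weak matchings of curves -/

/-- A single reparametrization witnesses Fréchet distance at most `δ` between `f` and `g`. -/
def Close {d : ℕ} (f g : ℝ → Pt d) (δ : ℝ) : Prop :=
  ∃ γ, IsReparam γ ∧ ∀ s ∈ Icc (0:ℝ) 1, ‖f (γ s) - g s‖ ≤ δ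

/-- `f` on `[a,b]` and `g` on `[c,e]` can be traversed simultaneously, by weakly increasing
continuous traversals, staying within distance `δ`. The traversals are functions on all of `ℝ`, but
only their restrictions to `[0,1]` matter. -/
def Matched {d : ℕ} (f : ℝ → Pt d) (a b : ℝ) (g : ℝ → Pt d) (c e : ℝ) (δ : ℝ) : Prop :=
  ∃ α β : ℝ → ℝ, Continuous α ∧ Monotone α ∧ Continuous β ∧ Monotone β ∧
    α 0 = a ∧ α 1 = b ∧ β 0 = c ∧ β 1 = e ∧ ∀ s ∈ Icc (0:ℝ) 1, ‖f (α s) - g (β s)‖ ≤ δ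

lemma isReparam_id : IsReparam id :=
  ⟨continuousOn_id, strictMono_id.strictMonoOn _, by simp⟩

lemma IsReparam.mapsTo {γ : ℝ → ℝ} (h : IsReparam γ) {s : ℝ} (hs : s ∈ Icc (0:ℝ) 1) :
    γ s ∈ Icc (0:ℝ) 1 := by
  rw [← h.2.2]; exact mem_image_of_mem _ hs

lemma IsReparam.zero {γ : ℝ → ℝ} (h : IsReparam γ) : γ 0 = 0 := by
  obtain ⟨u, hu, hu0⟩ : (0:ℝ) ∈ γ '' Icc 0 1 := by rw [h.2.2]; simp
  have h1 := h.2.1.monotoneOn (by simp) hu hu.1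
  have h2 := (h.mapsTo (s := 0) (by simp)).1
  linarith

lemma IsReparam.one {γ : ℝ → ℝ} (h : IsReparam γ) : γ 1 = 1 := by
  obtain ⟨u, hu, hu0⟩ : (1:ℝ) ∈ γ '' Icc 0 1 := by rw [h.2.2]; simp
  have h1 := h.2.1.monotoneOn hu (by simp) hu.2
  have h2 := (h.mapsTo (s := 1) (by simp)).2
  linarith

lemma Close.frechetDist_le {d : ℕ} {f g : ℝ → Pt d} {δ : ℝ} (h : Close f g δ) :
    frechetDist f g ≤ δ := by
  obtain ⟨γ, hγ, hb⟩ := h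
  unfold frechetDist
  refine (ciInf_le ⟨0, ?_⟩ ⟨γ, hγ⟩).trans ?_
  · rintro _ ⟨γ', rfl⟩
    exact Real.iSup_nonneg fun s => norm_nonneg _
  · have : Nonempty (Icc (0:ℝ) 1) := ⟨⟨0, by simp⟩⟩
    exact ciSup_le fun s => hb s.1 s.2

/-- Continuity bounds the suprema in `frechetDist`, which would otherwise have the junk value `0`. -/
lemma close_of_frechetDist {d : ℕ} {f g : ℝ → Pt d} {δ δ' : ℝ} (hf : ContinuousOn f (Icc 0 1))
    (hg : ContinuousOn g (Icc 0 1)) (h : frechetDist f g ≤ δ) (hδ : δ < δ') : Close f g δ' := by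
  have : Nonempty {γ : ℝ → ℝ // IsReparam γ} := ⟨⟨id, isReparam_id⟩⟩
  obtain ⟨⟨γ, hγ⟩, hlt⟩ := exists_lt_of_ciInf_lt (lt_of_le_of_lt h hδ)
  refine ⟨γ, hγ, fun s hs => le_trans ?_ hlt.le⟩
  obtain ⟨A, hA⟩ := isCompact_Icc.exists_bound_of_continuousOn hf
  obtain ⟨B, hB⟩ := isCompact_Icc.exists_bound_of_continuousOn hg
  refine le_ciSup (f := fun s : Icc (0:ℝ) 1 => ‖f (γ s.1) - g s.1‖) ⟨A + B, ?_⟩ ⟨s, hs⟩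
  rintro _ ⟨u, rfl⟩
  exact (norm_sub_le _ _).trans (add_le_add (hA _ (hγ.mapsTo u.2)) (hB _ u.2))

lemma Close.trans {d : ℕ} {f g h : ℝ → Pt d} {δ δ' : ℝ} (h1 : Close f g δ) (h2 : Close g h δ') :
    Close f h (δ + δ') := by
  obtain ⟨γ, hγ, hb⟩ := h1
  obtain ⟨η, hη, hc⟩ := h2
  refine ⟨γ ∘ η, ⟨hγ.1.comp hη.1 fun s hs => hη.mapsTo hs,
    hγ.2.1.comp hη.2.1 fun s hs => hη.mapsTo hs, ?_⟩, fun s hs => ?_⟩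
  · rw [image_comp, hη.2.2, hγ.2.2]
  · exact (norm_sub_le_norm_sub_add_norm_sub _ (g (η s)) _).trans
      (add_le_add (hb _ (hη.mapsTo hs)) (hc s hs))

lemma Close.matched {d : ℕ} {f g : ℝ → Pt d} {δ : ℝ} (h : Close f g δ) :
    Matched f 0 1 g 0 1 δ := by
  obtain ⟨γ, hγ, hb⟩ := h
  -- `γ` is extended to the line by constants, through the clamp onto `[0,1]`
  have hmem : ∀ s : ℝ, max 0 (min 1 s) ∈ Icc (0:ℝ) 1 := fun s =>
    ⟨le_max_left _ _, max_le zero_le_one (min_le_left _ _)⟩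
  refine ⟨fun s => γ (max 0 (min 1 s)), id, hγ.1.comp_continuous (by fun_prop) hmem, ?_,
    continuous_id, monotone_id, ?_, ?_, rfl, rfl, ?_⟩
  · intro a b hab
    exact hγ.2.1.monotoneOn (hmem a) (hmem b) (max_le_max le_rfl (min_le_min le_rfl hab))
  · simpa using hγ.zero
  · simpa using hγ.one
  · intro s hs
    simpa [min_eq_right hs.2, max_eq_right hs.1] using hb s hs

lemma Matched.symm {d : ℕ} {f g : ℝ → Pt d} {a b c e δ : ℝ} (h : Matched f a b g c e δ) :
    Matched g c e f a b δ := by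
  obtain ⟨α, β, h1, h2, h3, h4, h5, h6, h7, h8, h9⟩ := h
  exact ⟨β, α, h3, h4, h1, h2, h7, h8, h5, h6, fun s hs => by rw [norm_sub_rev]; exact h9 s hs⟩

lemma Matched.append {d : ℕ} {f g : ℝ → Pt d} {a b a' c e c' δ : ℝ}
    (h : Matched f a b g c e δ) (h' : Matched f b a' g e c' δ) : Matched f a a' g c c' δ := by
  obtain ⟨α, β, h1, h2, h3, h4, h5, h6, h7, h8, h9⟩ := h
  obtain ⟨α', β', k1, k2, k3, k4, k5, k6, k7, k8, k9⟩ := h'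
  have hmin : Monotone fun s : ℝ => min (2 * s) 1 := fun x y hxy => min_le_min (by linarith) le_rfl
  have hmax : Monotone fun s : ℝ => max (2 * s - 1) 0 :=
    fun x y hxy => max_le_max (by linarith) le_rfl
  -- on each half of `[0,1]` one summand is the constant `b` (resp. `e`), which cancels
  refine ⟨fun s => α (min (2 * s) 1) + α' (max (2 * s - 1) 0) - b,
    fun s => β (min (2 * s) 1) + β' (max (2 * s - 1) 0) - e, by fun_prop, ?_, by fun_prop, ?_,
    ?_, ?_, ?_, ?_, ?_⟩
  · intro x y hxy
    have := h2 (hmin hxy)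
    have := k2 (hmax hxy)
    simp only at *; linarith
  · intro x y hxy
    have := h4 (hmin hxy)
    have := k4 (hmax hxy)
    simp only at *; linarith
  · norm_num [h5, k5]
  · norm_num [h6, k6]
  · norm_num [h7, k7]
  · norm_num [h8, k8]
  · intro s hs
    rcases le_total (2 * s) 1 with hs2 | hs2
    · have := h9 (2 * s) ⟨by linarith [hs.1], hs2⟩
      simpa [min_eq_left hs2, max_eq_right (sub_nonpos.2 hs2), k5, k7] using this
    · have := k9 (2 * s - 1) ⟨by linarith, by linarith [hs.2]⟩
      simpa [min_eq_right hs2, max_eq_left (sub_nonneg.2 hs2), h6, h8] using this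

lemma Matched.of_affine_left {d : ℕ} {f g : ℝ → Pt d} {a b c e δ : ℝ} (hab : a ≤ b)
    (h : Matched (fun s => f (a + s * (b - a))) 0 1 g c e δ) : Matched f a b g c e δ := by
  obtain ⟨α, β, h1, h2, h3, h4, h5, h6, h7, h8, h9⟩ := h
  refine ⟨fun s => a + α s * (b - a), β, by fun_prop, ?_, h3, h4, by simp [h5], by simp [h6],
    h7, h8, h9⟩
  intro x y hxy
  have := mul_le_mul_of_nonneg_right (h2 hxy) (sub_nonneg.2 hab)
  simp only; linarith

lemma Matched.affine_left {d : ℕ} {f g : ℝ → Pt d} {a b c e δ : ℝ} (hab : a < b)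
    (h : Matched f a b g c e δ) : Matched (fun s => f (a + s * (b - a))) 0 1 g c e δ := by
  obtain ⟨α, β, h1, h2, h3, h4, h5, h6, h7, h8, h9⟩ := h
  have hba : b - a ≠ 0 := (sub_pos.2 hab).ne'
  refine ⟨fun s => (α s - a) / (b - a), β, by fun_prop, ?_, h3, h4, by simp [h5], by simp [h6, hba],
    h7, h8, ?_⟩
  · intro x y hxy
    exact div_le_div_of_nonneg_right (sub_le_sub_right (h2 hxy) _) (sub_pos.2 hab).le
  · intro s hs
    have e1 : a + (α s - a) / (b - a) * (b - a) = α s := by field_simp; ring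
    simp only [e1]
    exact h9 s hs

/-- Mixing a monotone map with the identity gives an increasing self-homeomorphism of the line. -/
lemma exists_orderIso_mix {α : ℝ → ℝ} (hc : Continuous α) (hm : Monotone α) {η : ℝ} (h0 : 0 < η)
    (h1 : η < 1) : ∃ F : ℝ ≃o ℝ, ∀ s, F s = (1 - η) * α s + η * s := by
  have hη : 0 ≤ 1 - η := by linarith
  have hmono : StrictMono fun s => (1 - η) * α s + η * s := by
    intro x y hxy
    have := mul_le_mul_of_nonneg_left (hm hxy.le) hη
    have := mul_lt_mul_of_pos_left hxy h0
    simp only; linarith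
  have hsurj : Function.Surjective fun s => (1 - η) * α s + η * s := by
    refine Continuous.surjective (by fun_prop) ?_ ?_
    · refine Filter.tendsto_atTop_add_left_of_le' _ ((1 - η) * α 0) ?_
        (Filter.tendsto_id.const_mul_atTop h0)
      filter_upwards [Filter.eventually_ge_atTop 0] with s hs
      exact mul_le_mul_of_nonneg_left (hm hs) hη
    · refine Filter.tendsto_atBot_add_left_of_ge' _ ((1 - η) * α 0) ?_
        (Filter.tendsto_id.const_mul_atBot h0)
      filter_upwards [Filter.eventually_le_atBot 0] with s hs
      exact mul_le_mul_of_nonneg_left (hm hs) hη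
  exact ⟨StrictMono.orderIsoOfSurjective _ hmono hsurj, fun s => rfl⟩

/-- A weak matching becomes a strict one at an arbitrarily small cost, by uniform continuity. -/
lemma Matched.close {d : ℕ} {f g : ℝ → Pt d} {δ δ' : ℝ} (hf : ContinuousOn f (Icc 0 1))
    (hg : ContinuousOn g (Icc 0 1)) (h : Matched f 0 1 g 0 1 δ) (hδ : δ < δ') : Close f g δ' := by
  obtain ⟨α, β, h1, h2, h3, h4, h5, h6, h7, h8, h9⟩ := h
  have hε : 0 < (δ' - δ) / 2 := by linarith
  obtain ⟨r, hr, hfr⟩ := Metric.uniformContinuousOn_iff.1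
    (isCompact_Icc.uniformContinuousOn_of_continuous hf) _ hε
  obtain ⟨r', hr', hgr⟩ := Metric.uniformContinuousOn_iff.1
    (isCompact_Icc.uniformContinuousOn_of_continuous hg) _ hε
  -- the mixing weight moves parameters in `[0,1]` by less than both moduli of continuity
  obtain ⟨η, hη0, hη⟩ := exists_between (lt_min (lt_min hr hr') zero_lt_one)
  obtain ⟨hηr, hη1⟩ := lt_min_iff.1 hη
  obtain ⟨hηr, hηr'⟩ := lt_min_iff.1 hηr
  obtain ⟨F, hF⟩ := exists_orderIso_mix h1 h2 hη0 hη1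
  obtain ⟨G, hG⟩ := exists_orderIso_mix h3 h4 hη0 hη1
  have hF0 : F 0 = 0 := by rw [hF, h5]; ring
  have hF1 : F 1 = 1 := by rw [hF, h6]; ring
  have hG0 : G.symm 0 = 0 := by rw [G.symm_apply_eq, hG, h7]; ring
  have hG1 : G.symm 1 = 1 := by rw [G.symm_apply_eq, hG, h8]; ring
  -- a mixed parameter stays in `[0,1]`, within `η` of the original one
  have near : ∀ p s : ℝ, p ∈ Icc (0:ℝ) 1 → s ∈ Icc (0:ℝ) 1 →
      (1 - η) * p + η * s ∈ Icc (0:ℝ) 1 ∧ dist ((1 - η) * p + η * s) p ≤ η := by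
    rintro p s ⟨p0, p1⟩ ⟨s0, s1⟩
    refine ⟨⟨by nlinarith, by nlinarith⟩, ?_⟩
    rw [Real.dist_eq, abs_le]
    constructor <;> nlinarith
  refine ⟨fun s => F (G.symm s), ⟨(F.continuous.comp G.symm.continuous).continuousOn,
    (F.strictMono.comp G.symm.strictMono).strictMonoOn _, ?_⟩, fun u hu => ?_⟩
  · change (F ∘ G.symm) '' _ = _
    rw [image_comp, OrderIso.image_Icc, OrderIso.image_Icc, hG0, hG1, hF0, hF1]
  · obtain ⟨s, rfl⟩ := G.surjective u
    have hs : s ∈ Icc (0:ℝ) 1 := by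
      have a0 := G.symm.monotone hu.1
      have a1 := G.symm.monotone hu.2
      rw [hG0, G.symm_apply_apply] at a0
      rw [hG1, G.symm_apply_apply] at a1
      exact ⟨a0, a1⟩
    have hα : α s ∈ Icc (0:ℝ) 1 := ⟨h5 ▸ h2 hs.1, h6 ▸ h2 hs.2⟩
    have hβ : β s ∈ Icc (0:ℝ) 1 := ⟨h7 ▸ h4 hs.1, h8 ▸ h4 hs.2⟩
    obtain ⟨m1, d1⟩ := near _ s hα hs
    obtain ⟨m2, d2⟩ := near _ s hβ hs
    have e1 := hfr _ m1 _ hα (d1.trans_lt hηr)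
    have e2 := hgr _ m2 _ hβ (d2.trans_lt hηr')
    have e3 := h9 s hs
    rw [← dist_eq_norm] at e3 ⊢
    simp only [G.symm_apply_apply]
    rw [hF, hG]
    have e4 := dist_triangle4 (f ((1 - η) * α s + η * s)) (f (α s)) (g (β s))
      (g ((1 - η) * β s + η * s))
    rw [dist_comm (g (β s))] at e4
    linarith

/-! ### Segments, subcurves and the four-vertex polyline -/

lemma continuous_seg {d : ℕ} (a b : Pt d) : Continuous (seg a b) := by
  unfold seg; fun_prop

lemma continuousOn_subcurve {d : ℕ} {P : ℝ → Pt d} (hP : ContinuousOn P (Icc 0 1)) {a b : ℝ}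
    (ha : 0 ≤ a) (hab : a ≤ b) (hb : b ≤ 1) : ContinuousOn (subcurve P a b) (Icc 0 1) := by
  refine hP.comp (by fun_prop) fun s hs => ?_
  obtain ⟨s0, s1⟩ := hs
  exact ⟨by nlinarith, by nlinarith⟩

lemma isPolygonal_two {d : ℕ} {Q : ℝ → Pt d} (h : IsPolygonal Q 2) :
    ∃ a b, ∀ s ∈ Icc (0:ℝ) 1, Q s = seg a b s := by
  obtain ⟨n, hn, pts, rfl⟩ := h
  have : n = 0 ∨ n = 1 := by omega
  rcases this with rfl | rfl
  · refine ⟨pts 0, pts 0, fun s _ => ?_⟩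
    simp [polyline, seg, ← add_smul]
  · refine ⟨pts 0, pts 1, fun s _ => ?_⟩
    simp [polyline, seg]

section Polyline

variable {d : ℕ} (a b c e : Pt d)

lemma polyline_first {s : ℝ} (hs : s ∈ Icc (0:ℝ) 1) :
    polyline (n := 3) ![a, b, c, e] (0 + s * (1 / 3 - 0)) = seg a b s := by
  rcases hs.2.lt_or_eq with h | rfl
  · have hf : ⌊s⌋₊ = 0 := Nat.floor_eq_zero.2 h
    have e1 : (0 + s * (1 / 3 - 0)) * ((3 : ℕ) : ℝ) = s := by push_cast; ring
    simp only [polyline, seg, e1, hf]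
    simp
  · have e1 : (0 + (1:ℝ) * (1 / 3 - 0)) * ((3 : ℕ) : ℝ) = 1 := by norm_num
    simp only [polyline, seg, e1, Nat.floor_one]
    simp

lemma polyline_second {s : ℝ} (hs : s ∈ Icc (0:ℝ) 1) :
    polyline (n := 3) ![a, b, c, e] (1 / 3 + s * (2 / 3 - 1 / 3)) = seg b c s := by
  rcases hs.2.lt_or_eq with h | rfl
  · have hf : ⌊1 + s⌋₊ = 1 := by
      rw [Nat.floor_eq_iff (by linarith [hs.1])]
      exact ⟨by push_cast; linarith [hs.1], by push_cast; linarith⟩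
    have e1 : (1 / 3 + s * (2 / 3 - 1 / 3)) * ((3 : ℕ) : ℝ) = 1 + s := by push_cast; ring
    simp only [polyline, seg, e1, hf]
    simp
  · have e1 : (1 / 3 + (1:ℝ) * (2 / 3 - 1 / 3)) * ((3 : ℕ) : ℝ) = 2 := by norm_num
    simp only [polyline, seg, e1, Nat.floor_ofNat]
    simp

lemma polyline_third {s : ℝ} (hs : s ∈ Icc (0:ℝ) 1) :
    polyline (n := 3) ![a, b, c, e] (2 / 3 + s * (1 - 2 / 3)) = seg c e s := by
  have e1 : (2 / 3 + s * (1 - 2 / 3)) * ((3 : ℕ) : ℝ) = 2 + s := by push_cast; ring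
  have hf : min ⌊2 + s⌋₊ (3 - 1) = 2 := by
    refine min_eq_right (Nat.le_floor ?_)
    push_cast; linarith [hs.1]
  simp only [polyline, seg, e1, hf]
  simp

lemma continuousOn_polyline : ContinuousOn (polyline (n := 3) ![a, b, c, e]) (Icc 0 1) := by
  -- on `[0,1]` the polyline is the sum of its clamped edge vectors
  have hcont : Continuous fun s : ℝ => a + (max 0 (min 1 (3 * s))) • (b - a)
      + (max 0 (min 1 (3 * s - 1))) • (c - b) + (max 0 (min 1 (3 * s - 2))) • (e - c) := by
    fun_prop
  refine hcont.continuousOn.congr fun s hs => ?_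
  obtain ⟨s0, s1⟩ := hs
  have clamp_neg : ∀ r : ℝ, r ≤ 0 → max 0 (min 1 r) = 0 := fun r hr =>
    max_eq_left ((min_le_right _ _).trans hr)
  have clamp_big : ∀ r : ℝ, 1 ≤ r → max 0 (min 1 r) = 1 := fun r hr => by
    rw [min_eq_left hr, max_eq_right zero_le_one]
  have clamp_mid : ∀ r : ℝ, 0 ≤ r → r ≤ 1 → max 0 (min 1 r) = r := fun r h0 h1 => by
    rw [min_eq_right h1, max_eq_right h0]
  beta_reduce
  rcases le_total s (1 / 3) with h | h
  · have key := polyline_first a b c e (s := 3 * s) ⟨by linarith, by linarith⟩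
    rw [show 0 + 3 * s * (1 / 3 - 0) = s by ring] at key
    rw [key, clamp_mid (3 * s) (by linarith) (by linarith), clamp_neg (3 * s - 1) (by linarith),
      clamp_neg (3 * s - 2) (by linarith), seg]
    module
  rcases le_total s (2 / 3) with h' | h'
  · have key := polyline_second a b c e (s := 3 * s - 1) ⟨by linarith, by linarith⟩
    rw [show 1 / 3 + (3 * s - 1) * (2 / 3 - 1 / 3) = s by ring] at key
    rw [key, clamp_big (3 * s) (by linarith), clamp_mid (3 * s - 1) (by linarith) (by linarith),
      clamp_neg (3 * s - 2) (by linarith), seg]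
    module
  · have key := polyline_third a b c e (s := 3 * s - 2) ⟨by linarith, by linarith⟩
    rw [show 2 / 3 + (3 * s - 2) * (1 - 2 / 3) = s by ring] at key
    rw [key, clamp_big (3 * s) (by linarith), clamp_big (3 * s - 1) (by linarith),
      clamp_mid (3 * s - 2) (by linarith) (by linarith), seg]
    module

end Polyline

lemma Matched.congr_left {d : ℕ} {f f' g : ℝ → Pt d} {c e δ : ℝ} (h : Matched f 0 1 g c e δ)
    (hf : ∀ s ∈ Icc (0:ℝ) 1, f' s = f s) : Matched f' 0 1 g c e δ := by
  obtain ⟨α, β, h1, h2, h3, h4, h5, h6, h7, h8, h9⟩ := h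
  refine ⟨α, β, h1, h2, h3, h4, h5, h6, h7, h8, fun s hs => ?_⟩
  rw [hf _ ⟨h5 ▸ h2 hs.1, h6 ▸ h2 hs.2⟩]
  exact h9 s hs

/-- If the segment `Q` is within `δ` of `P[a,b]`, then for `a ≤ u < v ≤ b` the segment
from `P u` to `P v` is matched to `P[u,v]` within `2δ`. -/
lemma matched_edge {d : ℕ} {P : ℝ → Pt d} {p q : Pt d} {Q : ℝ → Pt d} {a b u v δ : ℝ}
    (hQ : ∀ s ∈ Icc (0:ℝ) 1, Q s = seg p q s)
    (h : Close Q (subcurve P a b) δ) (hau : a ≤ u) (huv : u < v) (hvb : v ≤ b) :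
    Matched (seg (P u) (P v)) 0 1 P u v (2 * δ) := by
  obtain ⟨γ, hγ, hb⟩ := h
  have hab : 0 < b - a := by linarith
  -- `σ w` is the parameter of `P[a,b]` at which it visits `P w`
  let σ : ℝ → ℝ := fun w => (w - a) / (b - a)
  have hσ : ∀ w, u ≤ w → w ≤ v → σ w ∈ Icc (0:ℝ) 1 := fun w h1 h2 =>
    ⟨div_nonneg (by linarith) hab.le, (div_le_one hab).2 (by linarith)⟩
  have hσP : ∀ w, subcurve P a b (σ w) = P w := by
    intro w
    have : a + (w - a) / (b - a) * (b - a) = w := by field_simp; ring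
    simp only [subcurve, σ, this]
  have hσm : StrictMono σ := fun x y hxy => div_lt_div_of_pos_right (by linarith) hab
  have hclose : ∀ w, u ≤ w → w ≤ v → ‖seg p q (γ (σ w)) - P w‖ ≤ δ := by
    intro w h1 h2
    have := hb _ (hσ w h1 h2)
    rwa [hσP, hQ _ (hγ.mapsTo (hσ w h1 h2))] at this
  set y := γ (σ u) with hy
  set y' := γ (σ v) with hy'
  have hyy : 0 < y' - y := sub_pos.2
    (hγ.2.1 (hσ u le_rfl huv.le) (hσ v huv.le le_rfl) (hσm huv))
  -- the point of the time interval `[u,v]` reached at `s`, clamped to be defined on all of `ℝ`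
  let w : ℝ → ℝ := fun s => u + max 0 (min 1 s) * (v - u)
  have hw : ∀ s, u ≤ w s ∧ w s ≤ v := by
    intro s
    have h0 : (0:ℝ) ≤ max 0 (min 1 s) := le_max_left _ _
    have h1 : max 0 (min 1 s) ≤ (1:ℝ) := max_le zero_le_one (min_le_left _ _)
    constructor <;> simp only [w] <;> nlinarith
  have hwm : Monotone w := by
    intro x y hxy
    have : max 0 (min 1 x) ≤ max 0 (min 1 y) := max_le_max le_rfl (min_le_min le_rfl hxy)
    simp only [w]; nlinarith
  have hwc : Continuous w := by fun_prop
  have hσc : Continuous σ := by fun_prop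
  have hw0 : w 0 = u := by simp [w]
  have hw1 : w 1 = v := by simp [w]
  have hγm : Monotone fun s => γ (σ (w s)) := fun x z hxz =>
    hγ.2.1.monotoneOn (hσ _ (hw x).1 (hw x).2) (hσ _ (hw z).1 (hw z).2)
      (hσm.monotone (hwm hxz))
  have hγc : Continuous fun s => γ (σ (w s)) :=
    hγ.1.comp_continuous (by fun_prop) fun s => hσ _ (hw s).1 (hw s).2
  refine ⟨fun s => (γ (σ (w s)) - y) / (y' - y), w, (hγc.sub continuous_const).div_const _,
    ?_, hwc, hwm, ?_, ?_, hw0, hw1, fun s hs => ?_⟩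
  · intro x z hxz
    exact div_le_div_of_nonneg_right (sub_le_sub_right (hγm hxz) _) hyy.le
  · simp [hw0, hy]
  · simp only [hw1, ← hy']
    exact div_self hyy.ne'
  · set θ := (γ (σ (w s)) - y) / (y' - y) with hθ
    have hle1 : y ≤ γ (σ (w s)) := hγ.2.1.monotoneOn (hσ _ le_rfl huv.le)
      (hσ _ (hw s).1 (hw s).2) (hσm.monotone (hw s).1)
    have hle2 : γ (σ (w s)) ≤ y' := hγ.2.1.monotoneOn (hσ _ (hw s).1 (hw s).2)
      (hσ _ huv.le le_rfl) (hσm.monotone (hw s).2)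
    have hθ0 : 0 ≤ θ := div_nonneg (by linarith) hyy.le
    have hθ1 : 0 ≤ 1 - θ := sub_nonneg.2 ((div_le_one hyy).2 (by linarith))
    have hγθ : γ (σ (w s)) = y + θ * (y' - y) := by rw [hθ]; field_simp; ring
    have c1 := hclose u le_rfl huv.le
    have c2 := hclose v huv.le le_rfl
    have c3 := hclose (w s) (hw s).1 (hw s).2
    -- `seg p q` restricted to `[y, y']` is again a segment, traversed linearly in `θ`
    have key : seg (P u) (P v) θ - P (w s) = (seg p q (γ (σ (w s))) - P (w s))
        - ((1 - θ) • (seg p q y - P u) + θ • (seg p q y' - P v)) := by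
      rw [hγθ]; simp only [seg]; module
    rw [key]
    have n1 : ‖(1 - θ) • (seg p q y - P u)‖ ≤ (1 - θ) * δ := by
      rw [norm_smul, Real.norm_of_nonneg hθ1]
      exact mul_le_mul_of_nonneg_left c1 hθ1
    have n2 : ‖θ • (seg p q y' - P v)‖ ≤ θ * δ := by
      rw [norm_smul, Real.norm_of_nonneg hθ0]
      exact mul_le_mul_of_nonneg_left c2 hθ0
    have n3 := norm_sub_le (seg p q (γ (σ (w s))) - P (w s))
      ((1 - θ) • (seg p q y - P u) + θ • (seg p q y' - P v))
    have n4 := norm_add_le ((1 - θ) • (seg p q y - P u)) (θ • (seg p q y' - P v))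
    linarith

/-- Three matched pieces glue to a matching of the four-vertex polyline; the outer pieces may
degenerate to points. -/
lemma matched_polyline {d : ℕ} {P : ℝ → Pt d} {u₀ u₁ u₂ u₃ δ : ℝ}
    (h1 : Matched (seg (P u₀) (P u₁)) 0 1 P u₀ u₁ δ)
    (h2 : Matched (seg (P u₁) (P u₂)) 0 1 P u₁ u₂ δ)
    (h3 : Matched (seg (P u₂) (P u₃)) 0 1 P u₂ u₃ δ) :
    Matched P u₀ u₃ (polyline (n := 3) ![P u₀, P u₁, P u₂, P u₃]) 0 1 δ := by
  have k1 := (h1.congr_left fun s hs => polyline_first (P u₀) (P u₁) (P u₂) (P u₃) hs).of_affine_left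
    (by norm_num)
  have k2 := (h2.congr_left fun s hs => polyline_second (P u₀) (P u₁) (P u₂) (P u₃) hs).of_affine_left
    (by norm_num)
  have k3 := (h3.congr_left fun s hs => polyline_third (P u₀) (P u₁) (P u₂) (P u₃) hs).of_affine_left
    (by norm_num)
  exact ((k1.append k2).append k3).symm

lemma matched_seg_of_frechetDist {d : ℕ} {P : ℝ → Pt d} (hP : ContinuousOn P (Icc 0 1))
    {u v δ δ' : ℝ} (hu : 0 ≤ u) (huv : u ≤ v) (hv : v ≤ 1)
    (h : frechetDist (seg (P u) (P v)) (subcurve P u v) ≤ δ) (hδ : δ < δ') :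
    Matched (seg (P u) (P v)) 0 1 P u v δ' :=
  (Matched.of_affine_left huv (close_of_frechetDist (continuous_seg _ _).continuousOn
    (continuousOn_subcurve hP hu huv hv) h hδ).matched.symm).symm

lemma Matched.mono {d : ℕ} {f g : ℝ → Pt d} {a b c e δ δ' : ℝ} (h : Matched f a b g c e δ)
    (hδ : δ ≤ δ') : Matched f a b g c e δ' := by
  obtain ⟨α, β, h1, h2, h3, h4, h5, h6, h7, h8, h9⟩ := h
  exact ⟨α, β, h1, h2, h3, h4, h5, h6, h7, h8, fun s hs => (h9 s hs).trans hδ⟩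

/-! ### The clustering cost -/

/-- (`ℓ = 2`) If `R` admits a set cover and `S` is a set cover of
`R̃₂` of size `k`, then the `k` line segments `τ_{i,j}`, `r_{i,j} ∈ S`, form a set
of cluster centers `C` with `φ(P,C) ≤ 6Δ`. -/
theorem stmt9 {d : ℕ} (P : ℝ → Pt d) (hP : ContinuousOn P (Icc 0 1))
    (m : ℕ) (hm : 2 ≤ m) (t : ℕ → ℝ) (ht0 : t 1 = 0) (ht1 : t m = 1)
    (htmono : ∀ i, 1 ≤ i → i < m → t i < t (i + 1))
    (Δ : ℝ) (hΔ : 0 < Δ) (xz yz : ℕ → ℕ)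
    (hxz : ∀ z, 1 ≤ z → z < m →
      IsLeast {x | 1 ≤ x ∧ x ≤ z ∧ ∀ x', x ≤ x' → x' ≤ z →
        frechetDist (seg (P (t x')) (P (t z))) (subcurve P (t x') (t z)) ≤ 4 * Δ} (xz z))
    (hyz : ∀ z, 1 ≤ z → z < m →
      IsGreatest {y | z + 1 ≤ y ∧ y ≤ m ∧ ∀ y', z + 1 ≤ y' → y' ≤ y →
        frechetDist (seg (P (t (z+1))) (P (t y'))) (subcurve P (t (z+1)) (t y')) ≤ 4 * Δ}
        (yz z))
    (hcoverR : ∀ z, 1 ≤ z → z < m → ∃ Q, IsPolygonal Q 2 ∧ z ∈ rSet P m t Δ Q)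
    (k : ℕ) (ij : Fin k → ℕ × ℕ)
    (hij : ∀ s, 1 ≤ (ij s).1 ∧ (ij s).1 ≤ (ij s).2 ∧ (ij s).2 ≤ m)
    (hcover : ∀ z, 1 ≤ z → z < m →
      ∃ s, z ∈ rTilde2 P m t Δ xz yz (ij s).1 (ij s).2) :
    CostLE P m t {f | ∃ s, f = seg (P (t (ij s).1)) (P (t (ij s).2))} (6 * Δ) := by
  have hmono : MonotoneOn t (Icc 1 m) := by
    intro i hi j hj hle
    obtain ⟨n, rfl⟩ := Nat.exists_eq_add_of_le hle
    clear hle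
    induction n with
    | zero => exact le_rfl
    | succ n ih =>
      exact (ih ⟨by have := hi.1; omega, by have := hj.2; omega⟩).trans
        (htmono (i + n) (by have := hi.1; omega) (by have := hj.2; omega)).le
  have htmem : ∀ i, 1 ≤ i → i ≤ m → 0 ≤ t i ∧ t i ≤ 1 := fun i h1 h2 =>
    ⟨ht0 ▸ hmono ⟨le_rfl, by omega⟩ ⟨h1, h2⟩ h1, ht1 ▸ hmono ⟨h1, h2⟩ ⟨by omega, le_rfl⟩ h2⟩
  have main : ∀ z, 1 ≤ z → z < m → ∃ x y, 1 ≤ x ∧ x ≤ z ∧ z + 1 ≤ y ∧ y ≤ m ∧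
      ∃ s, frechetDist (subcurve P (t x) (t y)) (seg (P (t (ij s).1)) (P (t (ij s).2)))
        ≤ 6 * Δ := by
    intro z hz1 hzm
    obtain ⟨s, -, -, x, y, hx, hxz', hy, hyz', hfr⟩ := hcover z hz1 hzm
    obtain ⟨⟨hx1, -, hxall⟩, -⟩ := hxz z hz1 hzm
    obtain ⟨⟨-, hym, hyall⟩, -⟩ := hyz z hz1 hzm
    have hx1' : 1 ≤ x := hx1.trans hx
    have hym' : y ≤ m := hyz'.trans hym
    refine ⟨x, y, hx1', hxz', hy, hym', s, ?_⟩
    have txz := hmono ⟨hx1', by omega⟩ ⟨hz1, hzm.le⟩ hxz'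
    have tzy := hmono ⟨by omega, by omega⟩ ⟨by omega, hym'⟩ hy
    have tzz := htmono z hz1 hzm
    have tx := htmem x hx1' (by omega)
    have ty := htmem y (by omega) hym'
    have middle : Matched (seg (P (t z)) (P (t (z + 1)))) 0 1 P (t z) (t (z + 1)) (4 * Δ) := by
      obtain ⟨Q, hQ, -, -, i, j, hi, hiz, hzj, hj, hd⟩ := hcoverR z hz1 hzm
      obtain ⟨p, q, hpq⟩ := isPolygonal_two hQ
      have tiz := hmono ⟨hi, by omega⟩ ⟨hz1, hzm.le⟩ hiz
      have tzj := hmono ⟨by omega, by omega⟩ ⟨by omega, hj⟩ (Nat.succ_le_of_lt hzj)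
      have ti := htmem i hi (by omega)
      have tj := htmem j (by omega) hj
      -- the slack `Δ < 2Δ` absorbs that the infimum in `frechetDist` need not be attained
      have hcl : Close Q (subcurve P (t i) (t j)) (2 * Δ) :=
        close_of_frechetDist ((continuous_seg p q).continuousOn.congr hpq)
          (continuousOn_subcurve hP ti.1 (tiz.trans (tzz.le.trans tzj)) tj.2) hd (by linarith)
      exact (matched_edge hpq hcl tiz tzz tzj).mono (by linarith)
    refine le_of_forall_pos_le_add fun ε hε => ?_
    have first := matched_seg_of_frechetDist (δ' := 4 * Δ + ε / 3) hP tx.1 txz (by linarith)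
      (hxall x hx hxz') (by linarith)
    have last := matched_seg_of_frechetDist (δ' := 4 * Δ + ε / 3) hP (by linarith) tzy ty.2
      (hyall y hy hyz') (by linarith)
    have whole := matched_polyline first (middle.mono (by linarith)) last
    have c1 : Close (subcurve P (t x) (t y))
        (polyline (n := 3) ![P (t x), P (t z), P (t (z+1)), P (t y)]) (4 * Δ + 2 * ε / 3) :=
      (whole.affine_left (by linarith)).close
        (continuousOn_subcurve hP tx.1 (by linarith) ty.2)
        (continuousOn_polyline _ _ _ _) (by linarith)
    have c2 := close_of_frechetDist (δ' := 2 * Δ + ε / 3) (continuousOn_polyline _ _ _ _)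
      (continuous_seg _ _).continuousOn hfr (by linarith)
    exact (c1.trans c2).frechetDist_le.trans (by linarith)
  refine ⟨{q | 1 ≤ q.1 ∧ q.1 < q.2 ∧ q.2 ≤ m ∧ ∃ s, frechetDist (subcurve P (t q.1) (t q.2))
    (seg (P (t (ij s).1)) (P (t (ij s).2))) ≤ 6 * Δ}, fun q hq => ⟨hq.1, hq.2.1, hq.2.2.1⟩, ?_, ?_⟩
  · refine Subset.antisymm (iUnion₂_subset fun q hq => ?_) fun w hw => ?_
    · obtain ⟨h1, h2, h3, -⟩ := hq
      exact Icc_subset_Icc (htmem _ h1 (by omega)).1 (htmem _ (by omega) h3).2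
    · -- some breakpoint interval `[t_z, t_{z+1}]` contains `w`
      have hz : ∃ z, 1 ≤ z ∧ z < m ∧ t z ≤ w ∧ w ≤ t (z + 1) := by
        by_contra! hcon
        have hall : ∀ n, 1 ≤ n → n ≤ m → n < m → t n ≤ w := by
          intro n hn
          induction n, hn using Nat.le_induction with
          | base => intro _ _; rw [ht0]; exact hw.1
          | succ n hn ih =>
            intro _ h
            exact (hcon n hn (by omega) (ih (by omega) (by omega))).le
        have h1 := hcon (m - 1) (by omega) (by omega) (hall (m - 1) (by omega) (by omega) (by omega))
        rw [Nat.sub_add_cancel (by omega), ht1] at h1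
        exact absurd hw.2 (not_le.2 h1)
      obtain ⟨z, hz1, hzm, hw1, hw2⟩ := hz
      obtain ⟨x, y, hx1, hxz', hy, hym, hs⟩ := main z hz1 hzm
      refine mem_iUnion₂.2 ⟨(x, y), ⟨hx1, by simp only; omega, hym, hs⟩, ?_, ?_⟩
      · exact (hmono ⟨hx1, by omega⟩ ⟨hz1, hzm.le⟩ hxz').trans hw1
      · exact hw2.trans (hmono ⟨by omega, by omega⟩ ⟨by omega, hym⟩ hy)
  · rintro q ⟨-, -, -, s, hs⟩
    exact ⟨_, ⟨s, rfl⟩, hs⟩
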